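/- Let n ≥ 1 and let M be a model of PA⁻ + IΣn in which GPHP(Σ_{n+1}) fails. Then the set I = {a ∈ M : there exists b ∈ M such that every Σ_{n+1}-definable map from [0,b) into [0,a) fails to be injective} is a proper cut of M (downward closed, closed under successor, and not all of M) that is closed under addition; moreover, if a ∈ I and b > I then there is no Σ_{n+1}-definable injection from [0,b) into [0,a). -/

import Mathlib

/- Shared development: first-order arithmetic in the language {0,1,+,·,<},
   the arithmetic hierarchy, fragments of arithmetic, and coded finite
   combinatorics inside models. -/

open FirstOrder Language

namespace ArithFC

/-- Function symbols of the language of arithmetic: 0, 1, +, ·. -/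
inductive Func : ℕ → Type
  | zero : Func 0
  | one : Func 0
  | add : Func 2
  | mul : Func 2

/-- Relation symbols of the language of arithmetic: <. -/
inductive Rel : ℕ → Type
  | lt : Rel 2

/-- The first-order language {0, 1, +, ·, <}. -/
def lang : Language :=
  { Functions := Func, Relations := Rel }

section Instances

variable (M : Type) [lang.Structure M]

instance : Zero M := ⟨Structure.funMap (L := lang) Func.zero ![]⟩
instance : One M := ⟨Structure.funMap (L := lang) Func.one ![]⟩
instance : Add M := ⟨fun x y => Structure.funMap (L := lang) Func.add ![x, y]⟩
instance : Mul M := ⟨fun x y => Structure.funMap (L := lang) Func.mul ![x, y]⟩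
instance : LT M := ⟨fun x y => Structure.RelMap (L := lang) Rel.lt ![x, y]⟩
instance : LE M := ⟨fun x y => x < y ∨ x = y⟩

end Instances

/-- The numeral `n` in a model. -/
def numM (M : Type) [lang.Structure M] : ℕ → M
  | 0 => 0
  | n + 1 => numM M n + 1

/-- `b` is nonstandard (greater than every numeral). -/
def Nonstd {M : Type} [lang.Structure M] (b : M) : Prop := ∀ n : ℕ, numM M n < b

/-- The atomic formula `t < u`. -/
def ltFm {α : Type} {n : ℕ} (t u : lang.Term (α ⊕ Fin n)) : lang.BoundedFormula α n :=
  BoundedFormula.rel (Rel.lt : lang.Relations 2) ![t, u]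

/-- Δ₀ formulas: built from atomic formulas by boolean connectives and
bounded universal quantification (this generates, up to logical equivalence,
the usual class of bounded formulas). -/
inductive IsDelta0 {α : Type} : ∀ n : ℕ, lang.BoundedFormula α n → Prop
  | falsum (n : ℕ) : IsDelta0 n BoundedFormula.falsum
  | equal (n : ℕ) (t u : lang.Term (α ⊕ Fin n)) : IsDelta0 n (BoundedFormula.equal t u)
  | rel (n l : ℕ) (R : lang.Relations l) (ts : Fin l → lang.Term (α ⊕ Fin n)) :
      IsDelta0 n (BoundedFormula.rel R ts)
  | imp (n : ℕ) {φ ψ : lang.BoundedFormula α n} :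
      IsDelta0 n φ → IsDelta0 n ψ → IsDelta0 n (φ.imp ψ)
  | bdAll (n : ℕ) (t : lang.Term (α ⊕ Fin n)) {φ : lang.BoundedFormula α (n + 1)} :
      IsDelta0 (n + 1) φ →
      IsDelta0 n
        (BoundedFormula.all ((ltFm (Term.var (Sum.inr (Fin.last n))) (t.liftAt 1 n)).imp φ))

mutual
  /-- Σ_m formulas. -/
  inductive SigmaFm {α : Type} : ℕ → ∀ n : ℕ, lang.BoundedFormula α n → Prop
    | delta0 (m n : ℕ) {φ : lang.BoundedFormula α n} : IsDelta0 n φ → SigmaFm m n φ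
    | ofPi (m n : ℕ) {φ : lang.BoundedFormula α n} : PiFm m n φ → SigmaFm (m + 1) n φ
    | ex (m n : ℕ) {φ : lang.BoundedFormula α (n + 1)} :
        SigmaFm (m + 1) (n + 1) φ → SigmaFm (m + 1) n φ.ex
  /-- Π_m formulas. -/
  inductive PiFm {α : Type} : ℕ → ∀ n : ℕ, lang.BoundedFormula α n → Prop
    | delta0 (m n : ℕ) {φ : lang.BoundedFormula α n} : IsDelta0 n φ → PiFm m n φ
    | ofSigma (m n : ℕ) {φ : lang.BoundedFormula α n} : SigmaFm m n φ → PiFm (m + 1) n φ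
    | all (m n : ℕ) {φ : lang.BoundedFormula α (n + 1)} :
        PiFm (m + 1) (n + 1) φ → PiFm (m + 1) n φ.all
end

/-- A `k`-ary relation on `M` is Σ_m-definable (with parameters from `M`). -/
def IsSigmaDef (m : ℕ) (M : Type) [lang.Structure M] {k : ℕ} (R : (Fin k → M) → Prop) : Prop :=
  ∃ (p : ℕ) (φ : lang.BoundedFormula (Fin k ⊕ Fin p) 0) (w : Fin p → M),
    SigmaFm m 0 φ ∧ ∀ v : Fin k → M, R v ↔ φ.Realize (Sum.elim v w) finZeroElim

/-- A subset of `M` is Σ_m-definable with parameters. -/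
def SigmaDef1 (m : ℕ) (M : Type) [lang.Structure M] (A : Set M) : Prop :=
  IsSigmaDef m M (k := 1) fun v => v 0 ∈ A

/-- A binary relation on `M` is Σ_m-definable with parameters. -/
def SigmaDef2 (m : ℕ) (M : Type) [lang.Structure M] (R : M → M → Prop) : Prop :=
  IsSigmaDef m M (k := 2) fun v => R (v 0) (v 1)

/-- A ternary relation on `M` is Σ_m-definable with parameters. -/
def SigmaDef3 (m : ℕ) (M : Type) [lang.Structure M] (R : M → M → M → Prop) : Prop :=
  IsSigmaDef m M (k := 3) fun v => R (v 0) (v 1) (v 2)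

/-- `M` is a model of PA⁻ (the nonnegative part of a discretely ordered
commutative semiring). -/
structure PAm (M : Type) [lang.Structure M] : Prop where
  add_assoc : ∀ x y z : M, x + y + z = x + (y + z)
  add_comm : ∀ x y : M, x + y = y + x
  mul_assoc : ∀ x y z : M, x * y * z = x * (y * z)
  mul_comm : ∀ x y : M, x * y = y * x
  ldistrib : ∀ x y z : M, x * (y + z) = x * y + x * z
  add_zero : ∀ x : M, x + 0 = x
  mul_zero : ∀ x : M, x * 0 = 0
  mul_one : ∀ x : M, x * 1 = x
  lt_trans : ∀ x y z : M, x < y → y < z → x < z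
  lt_irrefl : ∀ x : M, ¬x < x
  lt_total : ∀ x y : M, x < y ∨ x = y ∨ y < x
  add_lt_add : ∀ x y z : M, x < y → x + z < y + z
  mul_lt_mul : ∀ x y z : M, x < y → 0 < z → x * z < y * z
  sub_exists : ∀ x y : M, x < y → ∃ z, x + z = y
  zero_lt_one : (0 : M) < 1
  discrete : ∀ x : M, 0 < x → (1 : M) ≤ x
  zero_le : ∀ x : M, (0 : M) ≤ x

/-- `M` satisfies the Σ_m-induction scheme (with parameters). -/
def ISig (m : ℕ) (M : Type) [lang.Structure M] : Prop :=
  ∀ A : Set M, SigmaDef1 m M A → (0 : M) ∈ A → (∀ x, x ∈ A → x + 1 ∈ A) → ∀ x, x ∈ A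

/-- `M` satisfies the Σ_m-collection (bounding) scheme (with parameters). -/
def BSig (m : ℕ) (M : Type) [lang.Structure M] : Prop :=
  ∀ R : M → M → Prop, SigmaDef2 m M R → ∀ a : M,
    (∀ x, x < a → ∃ y, R x y) → ∃ b, ∀ x, x < a → ∃ y, y < b ∧ R x y

section Coding

variable {M : Type} [lang.Structure M]

/-- `z` is the Cantor pair `⟨x, y⟩`: `2z = (x+y)(x+y+1) + 2y`. -/
def IsPairC (z x y : M) : Prop := z + z = (x + y) * (x + y + 1) + (y + y)

/-- Gödel's β-function: `x = a mod ((i+1)·b + 1)`. -/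
def BetaC (a b i x : M) : Prop :=
  x < (i + 1) * b + 1 ∧ ∃ q, a = q * ((i + 1) * b + 1) + x

/-- The sequence coded by `s` (via a Cantor pair of β-function data) has value `x`
at place `i`. -/
def SeqAt (s i x : M) : Prop := ∃ a b, IsPairC s a b ∧ BetaC a b i x

/-- `c` codes the M-finite set `X` of cardinality `card`: `c = ⟨card, s⟩` where `s`
codes the strictly increasing enumeration of `X` of length `card`. -/
def CodesFinset (c : M) (X : Set M) (card : M) : Prop :=
  ∃ s, IsPairC c card s ∧
    (∀ i, i < card → ∃ x, x ∈ X ∧ SeqAt s i x) ∧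
    (∀ i j x y, i < j → j < card → SeqAt s i x → SeqAt s j y → x < y) ∧
    (∀ x, x ∈ X ↔ ∃ i, i < card ∧ SeqAt s i x)

/-- `X` is an M-finite (coded) set. -/
def MFinite (X : Set M) : Prop := ∃ c card : M, CodesFinset c X card

/-- `d` codes an `e`-element subset `D` of `[0, y)`, i.e. an element of `[y]^e`. -/
def CodesTupleIn (d e y : M) (D : Set M) : Prop :=
  CodesFinset d D e ∧ ∀ z ∈ D, z < y

/-- `f` codes a (finite) function defined on all of `[0, a)`. -/
def CodesFunOn (f a : M) : Prop :=
  ∀ x, x < a → (∃ y, SeqAt f x y) ∧ ∀ y y', SeqAt f x y → SeqAt f x y' → y = y'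

/-- `X` is an M-coded subset of `[0, a)`. -/
def MCodedSubset (a : M) (X : Set M) : Prop :=
  MFinite X ∧ ∀ x ∈ X, x < a

end Coding

/-- An `M`-ultrafilter on `a`: an ultrafilter of the Boolean algebra of
M-finite subsets of `[0, a)`. -/
structure MUltra (M : Type) [lang.Structure M] (a : M) where
  sets : Set (Set M)
  mem_coded : ∀ X ∈ sets, MCodedSubset a X
  univ_mem : {x : M | x < a} ∈ sets
  superset_mem : ∀ X Y : Set M, X ∈ sets → MCodedSubset a Y → X ⊆ Y → Y ∈ sets
  inter_mem : ∀ X Y : Set M, X ∈ sets → Y ∈ sets → X ∩ Y ∈ sets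
  empty_not_mem : (∅ : Set M) ∉ sets
  ultra : ∀ X : Set M, MCodedSubset a X → X ∈ sets ∨ {x : M | x < a ∧ x ∉ X} ∈ sets

section Principles

variable (M : Type) [lang.Structure M]

/-- `F` is (the graph of) a Σ_m-definable injection from `[0, y)` into `[0, x)`. -/
def SigmaInjRel (m : ℕ) (F : M → M → Prop) (y x : M) : Prop :=
  SigmaDef2 m M F ∧
    (∀ u, u < y → ∃ v, v < x ∧ F u v) ∧
    (∀ u v v', u < y → F u v → F u v' → v = v') ∧
    (∀ u u' v, u < y → u' < y → F u v → F u' v → u = u')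

/-- There exists a Σ_m-definable injection from `[0, y)` into `[0, x)`. -/
def ExSigmaInj (m : ℕ) (y x : M) : Prop := ∃ F : M → M → Prop, SigmaInjRel M m F y x

/-- There exists a Σ_m-definable injection from all of `M` into `[0, a)`. -/
def SigmaInjWhole (m : ℕ) (a : M) : Prop :=
  ∃ F : M → M → Prop, SigmaDef2 m M F ∧
    (∀ u, ∃ v, v < a ∧ F u v) ∧
    (∀ u v v', F u v → F u v' → v = v') ∧
    (∀ u u' v, F u v → F u' v → u = u')

/-- CARD(Σ_m): no Σ_m-definable multivalued map sends `M` injectively below `a`. -/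
def CARD (m : ℕ) : Prop :=
  ∀ F : M → M → Prop, SigmaDef2 m M F → ∀ a : M,
    (∀ x, ∃ y, y < a ∧ F x y) →
      ∃ x0 x1 y, x0 ≠ x1 ∧ y < a ∧ F x0 y ∧ F x1 y

/-- GPHP(Σ_m): for every `x` there is `y` with no Σ_m-definable injection of
`[0,y)` into `[0,x)`. -/
def GPHP (m : ℕ) : Prop := ∀ x : M, ∃ y : M, ¬ExSigmaInj M m y x

/-- WPHP(Σ_m): for `x > 0` there is no Σ_m-definable injection of `[0,2x)` into `[0,x)`. -/
def WPHP (m : ℕ) : Prop := ∀ x : M, 0 < x → ¬ExSigmaInj M m (x + x) x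

/-- `C` is a Σ_m-definable `k`-coloring of `[y]^e` (acting on codes of
`e`-element subsets of `[0,y)`, independently of the chosen code). -/
def IsColoring (m : ℕ) (e y k : M) (C : M → M → Prop) : Prop :=
  SigmaDef2 m M C ∧
    (∀ d D, CodesTupleIn d e y D → ∃ i, i < k ∧ C d i) ∧
    (∀ d d' D i i', CodesTupleIn d e y D → CodesTupleIn d' e y D → C d i → C d' i' → i = i')

/-- FRT^e_k(Σ_m): every Σ_m-definable `k`-coloring of some `[y]^e` has an
M-finite homogeneous set of cardinality `x`, for every `x`. -/
def FRT (m : ℕ) (e k : M) : Prop :=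
  ∀ x : M, ∃ y : M, ∀ C : M → M → Prop, IsColoring M m e y k C →
    ∃ (c : M) (H : Set M), CodesFinset c H x ∧ (∀ z ∈ H, z < y) ∧
      ∃ i, ∀ d D, CodesFinset d D e → D ⊆ H → C d i

/-- fairFRT^e_k(Σ_m): the homogeneous set is required to be given as the range of a
Σ_m-definable injection from `[0,x)` into `[0,y)`. -/
def FairFRT (m : ℕ) (e k : M) : Prop :=
  ∀ x : M, ∃ y : M, ∀ C : M → M → Prop, IsColoring M m e y k C →
    ∃ H : M → M → Prop, SigmaInjRel M m H x y ∧
      ∃ i, ∀ d D, CodesFinset d D e → (∀ z ∈ D, ∃ u, u < x ∧ H u z) → C d i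

/-- `C` is a Σ_m-definable `k`-coloring of `[0, y)`. -/
def IsColoring1 (m : ℕ) (y k : M) (C : M → M → Prop) : Prop :=
  SigmaDef2 m M C ∧
    (∀ z, z < y → ∃ i, i < k ∧ C z i) ∧
    (∀ z i i', z < y → C z i → C z i' → i = i')

/-- FRT¹_k(Σ_m): every Σ_m-definable `k`-coloring of some `[0,y)` has an M-finite
homogeneous set of cardinality `x`, for every `x`. -/
def FRT1 (m : ℕ) (k : M) : Prop :=
  ∀ x : M, ∃ y : M, ∀ C : M → M → Prop, IsColoring1 M m y k C →
    ∃ (c : M) (H : Set M), CodesFinset c H x ∧ (∀ z ∈ H, z < y) ∧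
      ∃ i, ∀ z ∈ H, C z i

/-- fairFRT¹_k(Σ_m). -/
def FairFRT1 (m : ℕ) (k : M) : Prop :=
  ∀ x : M, ∃ y : M, ∀ C : M → M → Prop, IsColoring1 M m y k C →
    ∃ H : M → M → Prop, SigmaInjRel M m H x y ∧
      ∃ i, ∀ u v, u < x → H u v → C v i

end Principles

section Approx

variable {M : Type} [lang.Structure M]

/-- `f` is (the graph of) a partial function. -/
def IsPartialFun (f : M → M → Prop) : Prop := ∀ x y y', f x y → f x y' → y = y'

/-- `s` codes an approximation to the partial function `f` of length `b`. -/
def IsApprox (f : M → M → Prop) (s b : M) : Prop :=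
  (∀ i, i < b → ∃ v, SeqAt s i v) ∧
    (∀ i u v x y, i + 1 < b → SeqAt s i u → SeqAt s (i + 1) v → x ≤ u → f x y → y ≤ v)

/-- `s` codes a `g`-stretched approximation to the partial function `f` of length `b`. -/
def IsStretchedApprox (f g : M → M → Prop) (s b : M) : Prop :=
  (∀ i, i < b → ∃ v, SeqAt s i v) ∧
    (∀ i u w v x y, i + 1 < b → SeqAt s i u → g u w → SeqAt s (i + 1) v →
      x ≤ w → f x y → y ≤ v)

/-- The eventual (limit) value of `fun s => h s ·` is `x`. -/
def EvLim (h : M → M → Prop) (x : M) : Prop := ∃ s : M, ∀ t, s < t → h t x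

end Approx

/-- PΣ_m: every partial Σ_m-definable function admits approximations of every length. -/
def PSig (m : ℕ) (M : Type) [lang.Structure M] : Prop :=
  ∀ f : M → M → Prop, SigmaDef2 m M f → IsPartialFun f → ∀ b : M, ∃ s, IsApprox f s b

section Extensions

variable (M N : Type) [lang.Structure M] [lang.Structure N]

/-- `g : M → N` is Σ_m-elementary: Σ_m formulas with parameters from `M` transfer. -/
def SigmaElem (m : ℕ) (g : M → N) : Prop :=
  ∀ (p : ℕ) (φ : lang.BoundedFormula (Fin p) 0), SigmaFm m 0 φ →
    ∀ v : Fin p → M, (φ.Realize v finZeroElim ↔ φ.Realize (g ∘ v) finZeroElim)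

/-- The extension `g : M → N` is cofinal. -/
def Cofinal (g : M → N) : Prop := ∀ z : N, ∃ x : M, z ≤ g x

/-- `[0,a]^M = [0,a]^N`: every element of `N` below `g a` comes from `M`. -/
def SameBelow (g : M → N) (a : M) : Prop := ∀ z : N, z ≤ g a → ∃ x : M, g x = z

end Extensions

section Ramsey

variable {M : Type} [lang.Structure M]

/-- `f` is an M-coded `k`-coloring of `[y]^e` (assigning colors to codes of
`e`-subsets of `[0,y)`, independently of the code). -/
def CodedColoring (f e y k : M) : Prop :=
  (∀ d D, CodesTupleIn d e y D → ∃ i, i < k ∧ SeqAt f d i) ∧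
    (∀ d d' D i i', CodesTupleIn d e y D → CodesTupleIn d' e y D →
      SeqAt f d i → SeqAt f d' i' → i = i')

/-- The coded coloring `f` of `[y]^e` has an M-coded homogeneous set of cardinality `x`. -/
def CodedHomog (f e y x : M) : Prop :=
  ∃ (c : M) (H : Set M), CodesFinset c H x ∧ (∀ z ∈ H, z < y) ∧
    ∃ i, ∀ d D, CodesFinset d D e → D ⊆ H → SeqAt f d i

/-- `y = r(x, e, k)`: `y` is the least size guaranteeing coded homogeneous sets of
cardinality `x` for all coded `k`-colorings of `e`-subsets. -/
def IsRamsey (x e k y : M) : Prop :=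
  (∀ f, CodedColoring f e y k → CodedHomog f e y x) ∧
    (∀ y', y' < y → ∃ f, CodedColoring f e y' k ∧ ¬CodedHomog f e y' x)

/-- `y = r^(b)(x, e, k)`: the `b`-th iterate of the Ramsey function inside `M`. -/
def IterRamsey (x e k b y : M) : Prop :=
  ∃ s : M, SeqAt s 0 x ∧ SeqAt s b y ∧ (∀ i, i ≤ b → ∃ u, SeqAt s i u) ∧
    (∀ i u v, i < b → SeqAt s i u → SeqAt s (i + 1) v → IsRamsey u e k v)

end Ramsey

end ArithFC

namespace ArithFC

section Semantic

set_option linter.unusedSectionVars false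

variable {M : Type} [lang.Structure M]

/-- Prepend an element to an environment. -/
def cn (x : M) (e : ℕ → M) : ℕ → M
  | 0 => x
  | i + 1 => e i

/-- Drop `k` elements from an environment. -/
def sh (k : ℕ) (e : ℕ → M) : ℕ → M := fun i => e (i + k)

theorem cn_eta (e : ℕ → M) : cn (e 0) (sh 1 e) = e := by
  funext i; cases i <;> rfl

/-- Term functions. -/
inductive Tm : ((ℕ → M) → M) → Prop
  | var (i : ℕ) : Tm (fun e => e i)
  | zero : Tm (fun _ => 0)
  | one : Tm (fun _ => 1)
  | add {s t : (ℕ → M) → M} : Tm s → Tm t → Tm (fun e => s e + t e)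
  | mul {s t : (ℕ → M) → M} : Tm s → Tm t → Tm (fun e => s e * t e)

/-- Environment transformers given by terms. -/
def Ev (g : (ℕ → M) → (ℕ → M)) : Prop := ∀ i, Tm (fun e => g e i)

theorem Ev.cn {t : (ℕ → M) → M} {g : (ℕ → M) → (ℕ → M)} (ht : Tm t) (hg : Ev g) :
    Ev (fun e => cn (t e) (g e)) := by
  intro i; cases i with
  | zero => exact ht
  | succ i => exact hg i

theorem Ev.sh (k : ℕ) : Ev (M := M) (fun e => sh k e) := fun i => Tm.var (i + k)

theorem Ev.id : Ev (M := M) (fun e => e) := fun i => Tm.var i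

theorem Tm.subst {t : (ℕ → M) → M} (ht : Tm t) {g : (ℕ → M) → (ℕ → M)} (hg : Ev g) :
    Tm (fun e => t (g e)) := by
  induction ht with
  | var i => exact hg i
  | zero => exact Tm.zero
  | one => exact Tm.one
  | add _ _ h1 h2 => exact Tm.add h1 h2
  | mul _ _ h1 h2 => exact Tm.mul h1 h2

/-- Bounded relations on environments. -/
inductive D0 : ((ℕ → M) → Prop) → Prop
  | fls : D0 (fun _ => False)
  | eq {s t : (ℕ → M) → M} : Tm s → Tm t → D0 (fun e => s e = t e)
  | lt {s t : (ℕ → M) → M} : Tm s → Tm t → D0 (fun e => s e < t e)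
  | imp {A B : (ℕ → M) → Prop} : D0 A → D0 B → D0 (fun e => A e → B e)
  | ball {t : (ℕ → M) → M} {A : (ℕ → M) → Prop} : Tm t → D0 A →
      D0 (fun e => ∀ x, x < t e → A (cn x e))

theorem D0.subst {R : (ℕ → M) → Prop} (hR : D0 R) :
    ∀ {g : (ℕ → M) → (ℕ → M)}, Ev g → D0 (fun e => R (g e)) := by
  induction hR with
  | fls => intro g hg; exact D0.fls
  | eq hs ht => intro g hg; exact D0.eq (hs.subst hg) (ht.subst hg)
  | lt hs ht => intro g hg; exact D0.lt (hs.subst hg) (ht.subst hg)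
  | imp _ _ h1 h2 => intro g hg; exact D0.imp (h1 hg) (h2 hg)
  | @ball t A ht _ ih =>
    intro g hg
    have h1 : Ev (M := M) (fun e => ArithFC.cn (e 0) (g (ArithFC.sh 1 e))) :=
      Ev.cn (Tm.var 0) (fun i => Tm.subst (hg i) (Ev.sh 1))
    exact D0.ball (t := fun e => t (g e)) (ht.subst hg) (ih h1)

theorem D0.not {R : (ℕ → M) → Prop} (h : D0 R) : D0 (fun e => ¬ R e) := D0.imp h D0.fls

/-- Semantic `Σ_m` relations, in normal form. -/
def S : ℕ → ((ℕ → M) → Prop) → Prop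
  | 0, R => D0 R
  | m + 1, R => ∃ Q : (ℕ → M) → Prop, S m Q ∧ ∀ e, R e ↔ ∃ y, ¬ Q (cn y e)

theorem S.congr {m : ℕ} {R R' : (ℕ → M) → Prop} (h : S m R) (hh : ∀ e, R' e ↔ R e) : S m R' := by
  have : R' = R := funext fun e => propext (hh e)
  rw [this]; exact h

theorem S.subst : ∀ {m : ℕ} {R : (ℕ → M) → Prop}, S m R →
    ∀ {g : (ℕ → M) → (ℕ → M)}, Ev g → S m (fun e => R (g e)) := by
  intro m
  induction m with
  | zero => intro R h g hg; exact D0.subst h hg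
  | succ m ih =>
    rintro R ⟨Q, hQ, h⟩ g hg
    have h1 : Ev (M := M) (fun e => ArithFC.cn (e 0) (g (ArithFC.sh 1 e))) :=
      Ev.cn (Tm.var 0) (fun i => Tm.subst (hg i) (Ev.sh 1))
    exact ⟨_, ih hQ h1, fun e => h (g e)⟩

/-- Complements go up one level. -/
theorem S.compl {m : ℕ} {R : (ℕ → M) → Prop} (h : S m R) : S (m + 1) (fun e => ¬ R e) :=
  ⟨fun e => R (sh 1 e), h.subst (Ev.sh 1), fun e => ⟨fun h => ⟨0, h⟩, fun ⟨_, h⟩ => h⟩⟩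

theorem S.succ : ∀ {m : ℕ} {R : (ℕ → M) → Prop}, S m R → S (m + 1) R := by
  intro m
  induction m with
  | zero =>
    intro R h
    exact (S.compl (m := 0) (D0.not h)).congr (fun e => not_not.symm)
  | succ m ih =>
    rintro R ⟨Q, hQ, h⟩
    exact ⟨Q, ih hQ, h⟩

theorem S.ofD0 : ∀ {m : ℕ} {R : (ℕ → M) → Prop}, D0 R → S m R := by
  intro m
  induction m with
  | zero => intro R h; exact h
  | succ m ih => intro R h; exact (ih h).succ

/-- Closure of a class under connectives and bounded quantifiers. -/
structure Good (M : Type) [lang.Structure M] (m : ℕ) : Prop where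
  and : ∀ {A B : (ℕ → M) → Prop}, S m A → S m B → S m (fun e => A e ∧ B e)
  or : ∀ {A B : (ℕ → M) → Prop}, S m A → S m B → S m (fun e => A e ∨ B e)
  ball : ∀ {t : (ℕ → M) → M} {A : (ℕ → M) → Prop}, Tm t → S m A →
      S m (fun e => ∀ x, x < t e → A (cn x e))
  bex : ∀ {t : (ℕ → M) → M} {A : (ℕ → M) → Prop}, Tm t → S m A →
      S m (fun e => ∃ x, x < t e ∧ A (cn x e))

theorem good_zero : Good M 0 where
  and hA hB := S.congr (m := 0) (D0.not (D0.imp hA (D0.not hB))) (fun e => by tauto)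
  or hA hB := S.congr (m := 0) (D0.imp (D0.not hA) hB) (fun e => by tauto)
  ball ht hA := D0.ball ht hA
  bex ht hA := S.congr (m := 0) (D0.not (D0.ball ht (D0.not hA))) (fun e => by push Not; rfl)

/-- Induction for semantic classes. -/
def Ind (M : Type) [lang.Structure M] (m : ℕ) : Prop :=
  ∀ R : (ℕ → M) → Prop, S m R → ∀ e, R (cn 0 e) → (∀ x, R (cn x e) → R (cn (x + 1) e)) →
    ∀ x, R (cn x e)

theorem Ind.pred {m : ℕ} (h : Ind M (m + 1)) : Ind M m := fun R hR => h R hR.succ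

section Arith

theorem lt_max (hPA : PAm M) (x y : M) : ∃ z, x < z ∧ y < z := by
  have h1 : ∀ u : M, u < u + 1 := by
    intro u
    have := hPA.add_lt_add 0 1 u hPA.zero_lt_one
    rwa [hPA.add_comm 0, hPA.add_zero, hPA.add_comm 1] at this
  rcases hPA.lt_total x y with h | h | h
  · exact ⟨y + 1, hPA.lt_trans _ _ _ h (h1 y), h1 y⟩
  · subst h; exact ⟨x + 1, h1 x, h1 x⟩
  · exact ⟨x + 1, h1 x, hPA.lt_trans _ _ _ h (h1 x)⟩

theorem not_lt_zero (hPA : PAm M) (x : M) : ¬ x < 0 := by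
  intro h
  rcases hPA.zero_le x with h' | h'
  · exact hPA.lt_irrefl _ (hPA.lt_trans _ _ _ h h')
  · exact hPA.lt_irrefl 0 (by rw [← h'] at h; exact h)

theorem succ_le (hPA : PAm M) {x y : M} (h : x < y) : x + 1 < y ∨ x + 1 = y := by
  obtain ⟨z, hz⟩ := hPA.sub_exists x y h
  rcases hPA.zero_le z with h' | h'
  · rcases hPA.discrete z h' with h2 | h2
    · left
      have := hPA.add_lt_add 1 z x h2
      rwa [hPA.add_comm 1, hPA.add_comm z, hz] at this
    · right; rw [h2, hz]
  · rw [← h', hPA.add_zero] at hz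
    subst hz; exact absurd h (hPA.lt_irrefl _)

theorem lt_succ (hPA : PAm M) {x y : M} (h : x < y + 1) : x < y ∨ x = y := by
  rcases hPA.lt_total x y with h1 | h1 | h1
  · exact Or.inl h1
  · exact Or.inr h1
  · exfalso
    rcases succ_le hPA h1 with h2 | h2
    · exact hPA.lt_irrefl _ (hPA.lt_trans _ _ _ h h2)
    · rw [h2] at h; exact hPA.lt_irrefl _ h

theorem add_lt_left (hPA : PAm M) {x y : M} (z : M) (h : x < y) : z + x < z + y := by
  rw [hPA.add_comm z, hPA.add_comm z]; exact hPA.add_lt_add _ _ _ h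

theorem lt_of_add_lt (hPA : PAm M) {x y z : M} (h : z + x < z + y) : x < y := by
  rcases hPA.lt_total x y with h1 | h1 | h1
  · exact h1
  · subst h1; exact absurd h (hPA.lt_irrefl _)
  · exact absurd (hPA.lt_trans _ _ _ h (add_lt_left hPA z h1)) (hPA.lt_irrefl _)

theorem add_cancel (hPA : PAm M) {x y z : M} (h : z + x = z + y) : x = y := by
  rcases hPA.lt_total x y with h1 | h1 | h1
  · have := add_lt_left hPA z h1; rw [h] at this; exact absurd this (hPA.lt_irrefl _)
  · exact h1
  · have := add_lt_left hPA z h1; rw [h] at this; exact absurd this (hPA.lt_irrefl _)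

/-- `i < i'` and `j < c` give `c*i + j < c*i'`. -/
theorem block_lt (hPA : PAm M) {c i i' j : M} (hi : i < i') (hj : j < c) :
    c * i + j < c * i' := by
  have hc : (0 : M) < c := by
    rcases hPA.zero_le j with h | h
    · exact hPA.lt_trans _ _ _ h hj
    · rw [h]; exact hj
  have h1 : c * i + j < c * (i + 1) := by
    rw [hPA.ldistrib, hPA.mul_one]; exact add_lt_left hPA _ hj
  rcases succ_le hPA hi with h2 | h2
  · have := hPA.mul_lt_mul _ _ c h2 hc
    rw [hPA.mul_comm _ c, hPA.mul_comm _ c] at this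
    exact hPA.lt_trans _ _ _ h1 this
  · rw [← h2]; exact h1

theorem lt_add_of_lt (hPA : PAm M) {x y : M} (z : M) (h : x < y) : x < y + z := by
  rcases hPA.zero_le z with h1 | h1
  · have := add_lt_left hPA y h1
    rw [hPA.add_zero] at this
    exact hPA.lt_trans _ _ _ h this
  · rw [← h1, hPA.add_zero]; exact h

theorem block_inj (hPA : PAm M) {c i i' j j' : M} (hj : j < c) (hj' : j' < c)
    (h : c * i + j = c * i' + j') : i = i' := by
  rcases hPA.lt_total i i' with h1 | h1 | h1
  · have := lt_add_of_lt hPA j' (block_lt hPA h1 hj)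
    rw [h] at this; exact absurd this (hPA.lt_irrefl _)
  · exact h1
  · have := lt_add_of_lt hPA j (block_lt hPA h1 hj')
    rw [h] at this; exact absurd this (hPA.lt_irrefl _)

end Arith

/-- Closure of `Σ_{m+1}` under existential quantification. -/
theorem S.ex (hPA : PAm M) {m : ℕ} (hg : Good M m) {A : (ℕ → M) → Prop} (hA : S (m + 1) A) :
    S (m + 1) (fun e => ∃ x, A (cn x e)) := by
  obtain ⟨Q, hQ, h⟩ := hA
  -- environment inside: y, x, w, e
  have h1 : S m (fun e => Q (cn (e 0) (cn (e 1) (sh 3 e)))) :=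
    hQ.subst (Ev.cn (Tm.var 0) (Ev.cn (Tm.var 1) (Ev.sh 3)))
  have h2 := hg.ball (t := fun e => e 1) (Tm.var 1) h1
  have h3 := hg.ball (t := fun e => e 0) (Tm.var 0) h2
  refine ⟨_, h3, fun e => ?_⟩
  constructor
  · rintro ⟨x, hx⟩
    obtain ⟨y, hy⟩ := (h _).1 hx
    obtain ⟨w, hw1, hw2⟩ := lt_max hPA x y
    exact ⟨w, fun hh => hy (hh x hw1 y hw2)⟩
  · rintro ⟨w, hw⟩
    by_contra hc
    apply hw
    intro x _ y _
    by_contra hy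
    exact hc ⟨x, (h _).2 ⟨y, hy⟩⟩

theorem S.and_succ (hPA : PAm M) {m : ℕ} (hg : Good M m) {A B : (ℕ → M) → Prop}
    (hA : S (m + 1) A) (hB : S (m + 1) B) : S (m + 1) (fun e => A e ∧ B e) := by
  obtain ⟨Q, hQ, h⟩ := hA
  obtain ⟨Q', hQ', h'⟩ := hB
  have h1 : S m (fun e => Q (cn (e 0) (sh 2 e))) :=
    hQ.subst (Ev.cn (Tm.var 0) (Ev.sh 2))
  have h2 : S m (fun e => Q' (cn (e 1) (sh 2 e))) :=
    hQ'.subst (Ev.cn (Tm.var 1) (Ev.sh 2))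
  have h3 := S.ex hPA hg (S.ex hPA hg (hg.or h1 h2).compl)
  refine h3.congr fun e => ?_
  rw [h, h']
  constructor
  · rintro ⟨⟨y, hy⟩, ⟨y', hy'⟩⟩
    exact ⟨y', y, fun hh => hh.elim hy hy'⟩
  · rintro ⟨y', y, hh⟩
    exact ⟨⟨y, fun h => hh (Or.inl h)⟩, ⟨y', fun h => hh (Or.inr h)⟩⟩

theorem S.or_succ {m : ℕ} (hg : Good M m) {A B : (ℕ → M) → Prop}
    (hA : S (m + 1) A) (hB : S (m + 1) B) : S (m + 1) (fun e => A e ∨ B e) := by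
  obtain ⟨Q, hQ, h⟩ := hA
  obtain ⟨Q', hQ', h'⟩ := hB
  refine ⟨_, hg.and hQ hQ', fun e => ?_⟩
  show (A e ∨ B e) ↔ _
  rw [h, h']
  constructor
  · rintro (⟨y, hy⟩ | ⟨y, hy⟩)
    · exact ⟨y, fun hh => hy hh.1⟩
    · exact ⟨y, fun hh => hy hh.2⟩
  · rintro ⟨y, hy⟩
    by_cases hq : Q (cn y e)
    · exact Or.inr ⟨y, fun hq' => hy ⟨hq, hq'⟩⟩
    · exact Or.inl ⟨y, hq⟩

theorem good_succ (hPA : PAm M) {m : ℕ} (hg : Good M m) (hI : Ind M (m + 1)) :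
    Good M (m + 1) where
  and hA hB := S.and_succ hPA hg hA hB
  or hA hB := S.or_succ hg hA hB
  bex := by
    intro t A ht hA
    exact S.ex hPA hg (A := fun e => e 0 < t (sh 1 e) ∧ A e)
      (S.and_succ hPA hg (S.ofD0 (D0.lt (Tm.var 0) (ht.subst (Ev.sh 1)))) hA) |>.congr
        (fun e => Iff.rfl)
  ball := by
    rintro t A ht ⟨Q, hQ, h⟩
    -- T : environment (b, u, e) : for all x < u exists y < b, not Q (y, x, e)
    have h1 : S m (fun e => Q (cn (e 0) (cn (e 1) (sh 4 e)))) :=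
      hQ.subst (Ev.cn (Tm.var 0) (Ev.cn (Tm.var 1) (Ev.sh 4)))
    have h2 := hg.ball (t := fun e => e 1) (Tm.var 1) h1
    have h2' := hg.and (S.ofD0 (m := m) (D0.lt (Tm.var 0) (ht.subst (Ev.sh 3)))) h2
    have h3 := hg.bex (t := fun e => e 1) (Tm.var 1) h2'
    have h4 : S (m + 1) _ := ⟨_, h3, fun e => Iff.rfl⟩
    have key : ∀ e : ℕ → M, (∀ x, x < t e → A (cn x e)) →
        ∃ b, ∀ x, x < t e → ∃ y, y < b ∧ ¬ Q (cn y (cn x e)) := by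
      intro e he
      have hind := hI _ h4 e ?_ ?_ (t e)
      · obtain ⟨b, hb⟩ := hind
        refine ⟨b, fun x hx => ?_⟩
        by_contra hc
        apply hb
        refine ⟨x, hx, hx, fun y hy => ?_⟩
        by_contra hq
        exact hc ⟨y, hy, hq⟩
      · refine ⟨0, ?_⟩
        rintro ⟨x, hx, -⟩
        exact not_lt_zero hPA x hx
      · rintro u ⟨b, hb⟩
        by_cases hu : u < t e
        · obtain ⟨y, hy⟩ := (h _).1 (he u hu)
          obtain ⟨w, hw1, hw2⟩ := lt_max hPA b y
          refine ⟨w, ?_⟩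
          rintro ⟨x, hx, hxt, hxy⟩
          rcases lt_succ hPA hx with h5 | h5
          · exact hb ⟨x, h5, hxt, fun y' hy' => hxy y' (hPA.lt_trans _ _ _ hy' hw1)⟩
          · change x = u at h5
            subst h5
            exact hy (hxy y hw2)
        · refine ⟨b, ?_⟩
          rintro ⟨x, hx, hxt, hxy⟩
          rcases lt_succ hPA hx with h5 | h5
          · exact hb ⟨x, h5, hxt, hxy⟩
          · change x = u at h5
            subst h5
            exact hu hxt
    -- now the definition
    have k1 : S m (fun e => Q (cn (e 0) (cn (e 1) (sh 3 e)))) :=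
      hQ.subst (Ev.cn (Tm.var 0) (Ev.cn (Tm.var 1) (Ev.sh 3)))
    have k2 := hg.ball (t := fun e => e 1) (Tm.var 1) k1
    have k3 := hg.bex (t := fun e => t (sh 1 e)) (ht.subst (Ev.sh 1)) k2
    refine ⟨_, k3, fun e => ⟨fun he => ?_, ?_⟩⟩
    · obtain ⟨b, hb⟩ := key e he
      refine ⟨b, ?_⟩
      rintro ⟨x, hx, hxy⟩
      obtain ⟨y, hy, hq⟩ := hb x hx
      exact hq (hxy y hy)
    · rintro ⟨b, hb⟩ x hx
      rw [h]
      by_contra hc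
      apply hb
      refine ⟨x, hx, fun y _ => ?_⟩
      by_contra hq
      exact hc ⟨y, hq⟩

theorem good_of_ind (hPA : PAm M) : ∀ {n : ℕ}, Ind M n → ∀ m, m ≤ n → Good M m := by
  intro n
  induction n with
  | zero =>
    intro _ m hm
    obtain rfl : m = 0 := by omega
    exact good_zero
  | succ n ih =>
    intro hI m hm
    rcases Nat.lt_or_ge m (n + 1) with h | h
    · exact ih hI.pred m (by omega)
    · obtain rfl : m = n + 1 := by omega
      exact good_succ hPA (ih hI.pred n le_rfl) hI

/-! Translation from semantic relations to formulas. -/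

/-- Lift of a variable assignment under one more quantifier. -/
def up {α : Type} {n : ℕ} (σ : ℕ → α ⊕ Fin n) : ℕ → α ⊕ Fin (n + 1)
  | 0 => Sum.inr (Fin.last n)
  | i + 1 => Sum.map id Fin.castSucc (σ i)

theorem up_agree {α : Type} {n : ℕ} (σ : ℕ → α ⊕ Fin n) (v : α → M) (xs : Fin n → M) (x : M)
    (e : ℕ → M) (N : ℕ) (h : ∀ i, i < N → e i = Sum.elim v xs (σ i)) :
    ∀ i, i < N → cn x e i = Sum.elim v (Fin.snoc xs x) (up σ i) := by
  intro i hi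
  cases i with
  | zero => simp [cn, up]
  | succ i =>
    have := h i (by omega)
    simp only [cn, up, this]
    rcases σ i with a | j <;> simp

theorem Tm.term {t : (ℕ → M) → M} (ht : Tm t) : ∃ N : ℕ, ∀ (α : Type) (n : ℕ)
    (σ : ℕ → α ⊕ Fin n), ∃ τ : lang.Term (α ⊕ Fin n), ∀ (v : α → M) (xs : Fin n → M) (e : ℕ → M),
      (∀ i, i < N → e i = Sum.elim v xs (σ i)) → τ.realize (Sum.elim v xs) = t e := by
  induction ht with
  | var i =>
    exact ⟨i + 1, fun α n σ => ⟨Term.var (σ i), fun v xs e h => (h i (by omega)).symm⟩⟩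
  | zero =>
    refine ⟨0, fun α n σ => ⟨Term.func (Func.zero : lang.Functions 0) ![], fun v xs e _ => ?_⟩⟩
    show Structure.funMap (L := lang) Func.zero _ = Structure.funMap (L := lang) Func.zero _
    congr 1; funext i; exact i.elim0
  | one =>
    refine ⟨0, fun α n σ => ⟨Term.func (Func.one : lang.Functions 0) ![], fun v xs e _ => ?_⟩⟩
    show Structure.funMap (L := lang) Func.one _ = Structure.funMap (L := lang) Func.one _
    congr 1; funext i; exact i.elim0
  | @add s t _ _ h1 h2 =>
    obtain ⟨N1, h1⟩ := h1
    obtain ⟨N2, h2⟩ := h2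
    refine ⟨max N1 N2, fun α n σ => ?_⟩
    obtain ⟨τ1, k1⟩ := h1 α n σ
    obtain ⟨τ2, k2⟩ := h2 α n σ
    refine ⟨Term.func (Func.add : lang.Functions 2) ![τ1, τ2], fun v xs e h => ?_⟩
    beta_reduce
    rw [← k1 v xs e (fun i hi => h i (by omega)), ← k2 v xs e (fun i hi => h i (by omega))]
    show Structure.funMap (L := lang) Func.add _ = Structure.funMap (L := lang) Func.add _
    congr 1; funext i; fin_cases i <;> rfl
  | @mul s t _ _ h1 h2 =>
    obtain ⟨N1, h1⟩ := h1
    obtain ⟨N2, h2⟩ := h2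
    refine ⟨max N1 N2, fun α n σ => ?_⟩
    obtain ⟨τ1, k1⟩ := h1 α n σ
    obtain ⟨τ2, k2⟩ := h2 α n σ
    refine ⟨Term.func (Func.mul : lang.Functions 2) ![τ1, τ2], fun v xs e h => ?_⟩
    beta_reduce
    rw [← k1 v xs e (fun i hi => h i (by omega)), ← k2 v xs e (fun i hi => h i (by omega))]
    show Structure.funMap (L := lang) Func.mul _ = Structure.funMap (L := lang) Func.mul _
    congr 1; funext i; fin_cases i <;> rfl

theorem realize_ltFm {α : Type} {n : ℕ} (t u : lang.Term (α ⊕ Fin n)) (v : α → M)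
    (xs : Fin n → M) : (ltFm t u).Realize v xs ↔
      t.realize (Sum.elim v xs) < u.realize (Sum.elim v xs) := by
  show Structure.RelMap (L := lang) Rel.lt _ ↔ Structure.RelMap (L := lang) Rel.lt _
  have : (fun i => ((![t, u] : Fin 2 → lang.Term (α ⊕ Fin n)) i).realize (Sum.elim v xs)) =
      ![t.realize (Sum.elim v xs), u.realize (Sum.elim v xs)] := by
    funext i; fin_cases i <;> rfl
  rw [this]

theorem realize_lift {α : Type} {n : ℕ} (t : lang.Term (α ⊕ Fin n)) (v : α → M)
    (xs : Fin n → M) (x : M) :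
    (t.liftAt 1 n).realize (Sum.elim v (Fin.snoc xs x)) = t.realize (Sum.elim v xs) := by
  unfold Term.liftAt
  rw [Term.realize_relabel]
  congr 1
  funext a
  rcases a with a | i
  · rfl
  · simp only [Function.comp, Sum.map_inr, Sum.elim_inr, i.is_lt, if_true]
    exact Fin.snoc_castSucc (α := fun _ => M) x xs i

theorem D0.formula {R : (ℕ → M) → Prop} (hR : D0 R) : ∃ N : ℕ, ∀ (α : Type) (n : ℕ)
    (σ : ℕ → α ⊕ Fin n), ∃ φ : lang.BoundedFormula α n, IsDelta0 n φ ∧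
      ∀ (v : α → M) (xs : Fin n → M) (e : ℕ → M),
      (∀ i, i < N → e i = Sum.elim v xs (σ i)) → (φ.Realize v xs ↔ R e) := by
  induction hR with
  | fls => exact ⟨0, fun α n σ => ⟨_, IsDelta0.falsum n, fun v xs e _ => Iff.rfl⟩⟩
  | eq h1 h2 =>
    obtain ⟨N1, h1⟩ := h1.term
    obtain ⟨N2, h2⟩ := h2.term
    refine ⟨max N1 N2, fun α n σ => ?_⟩
    obtain ⟨τ1, k1⟩ := h1 α n σ
    obtain ⟨τ2, k2⟩ := h2 α n σ
    refine ⟨_, IsDelta0.equal n τ1 τ2, fun v xs e h => ?_⟩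
    beta_reduce
    rw [← k1 v xs e (fun i hi => h i (by omega)), ← k2 v xs e (fun i hi => h i (by omega))]
    rfl
  | lt h1 h2 =>
    obtain ⟨N1, h1⟩ := h1.term
    obtain ⟨N2, h2⟩ := h2.term
    refine ⟨max N1 N2, fun α n σ => ?_⟩
    obtain ⟨τ1, k1⟩ := h1 α n σ
    obtain ⟨τ2, k2⟩ := h2 α n σ
    refine ⟨ltFm τ1 τ2, IsDelta0.rel n 2 _ _, fun v xs e h => ?_⟩
    beta_reduce
    rw [← k1 v xs e (fun i hi => h i (by omega)), ← k2 v xs e (fun i hi => h i (by omega))]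
    exact realize_ltFm _ _ _ _
  | imp _ _ h1 h2 =>
    obtain ⟨N1, h1⟩ := h1
    obtain ⟨N2, h2⟩ := h2
    refine ⟨max N1 N2, fun α n σ => ?_⟩
    obtain ⟨τ1, d1, k1⟩ := h1 α n σ
    obtain ⟨τ2, d2, k2⟩ := h2 α n σ
    refine ⟨_, IsDelta0.imp n d1 d2, fun v xs e h => ?_⟩
    beta_reduce
    rw [← k1 v xs e (fun i hi => h i (by omega)), ← k2 v xs e (fun i hi => h i (by omega))]
    exact BoundedFormula.realize_imp
  | ball h1 _ h2 =>
    obtain ⟨N1, h1⟩ := h1.term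
    obtain ⟨N2, h2⟩ := h2
    refine ⟨max N1 N2, fun α n σ => ?_⟩
    obtain ⟨τ1, k1⟩ := h1 α n σ
    obtain ⟨τ2, d2, k2⟩ := h2 α (n + 1) (up σ)
    refine ⟨_, IsDelta0.bdAll n τ1 d2, fun v xs e h => ?_⟩
    beta_reduce
    rw [← k1 v xs e (fun i hi => h i (by omega)), BoundedFormula.realize_all]
    refine forall_congr' fun x => ?_
    rw [BoundedFormula.realize_imp, realize_ltFm, realize_lift,
      k2 v (Fin.snoc xs x) (cn x e) (up_agree σ v xs x e N2 (fun i hi => h i (by omega)))]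
    simp

theorem S.formula : ∀ {m : ℕ} {R : (ℕ → M) → Prop}, S m R → ∃ N : ℕ, ∀ (α : Type) (n : ℕ)
    (σ : ℕ → α ⊕ Fin n), (∃ φ : lang.BoundedFormula α n, SigmaFm m n φ ∧
      ∀ (v : α → M) (xs : Fin n → M) (e : ℕ → M),
      (∀ i, i < N → e i = Sum.elim v xs (σ i)) → (φ.Realize v xs ↔ R e)) ∧
      (∃ φ : lang.BoundedFormula α n, PiFm m n φ ∧
      ∀ (v : α → M) (xs : Fin n → M) (e : ℕ → M),
      (∀ i, i < N → e i = Sum.elim v xs (σ i)) → (φ.Realize v xs ↔ ¬ R e)) := by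
  intro m
  induction m with
  | zero =>
    intro R hR
    obtain ⟨N1, h1⟩ := D0.formula hR
    obtain ⟨N2, h2⟩ := D0.formula (D0.not hR)
    refine ⟨max N1 N2, fun α n σ => ⟨?_, ?_⟩⟩
    · obtain ⟨φ, d, k⟩ := h1 α n σ
      exact ⟨φ, SigmaFm.delta0 0 n d, fun v xs e h => k v xs e (fun i hi => h i (by omega))⟩
    · obtain ⟨φ, d, k⟩ := h2 α n σ
      exact ⟨φ, PiFm.delta0 0 n d, fun v xs e h => k v xs e (fun i hi => h i (by omega))⟩
  | succ m ih =>
    rintro R ⟨Q, hQ, hR⟩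
    obtain ⟨N, h⟩ := ih hQ
    refine ⟨N, fun α n σ => ?_⟩
    obtain ⟨⟨φ, d, k⟩, ⟨φ', d', k'⟩⟩ := h α (n + 1) (up σ)
    refine ⟨⟨φ'.ex, SigmaFm.ex m n (SigmaFm.ofPi m _ d'), fun v xs e he => ?_⟩,
      ⟨φ.all, PiFm.all m n (PiFm.ofSigma m _ d), fun v xs e he => ?_⟩⟩
    · rw [BoundedFormula.realize_ex, hR]
      exact exists_congr fun x => k' v (Fin.snoc xs x) (cn x e) (up_agree σ v xs x e N he)
    · rw [BoundedFormula.realize_all, hR]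
      push Not
      exact forall_congr' fun x => k v (Fin.snoc xs x) (cn x e) (up_agree σ v xs x e N he)

theorem S.sigmaDef {m : ℕ} {R : (ℕ → M) → Prop} (hR : S m R) (k : ℕ) (P : (Fin k → M) → Prop)
    (g : (Fin k → M) → (ℕ → M)) (w : ℕ → M) (hg1 : ∀ v (i : Fin k), g v i = v i)
    (hg2 : ∀ v (i : ℕ), g v (i + k) = w i) (hP : ∀ v, P v ↔ R (g v)) : IsSigmaDef m M P := by
  obtain ⟨N, h⟩ := hR.formula
  obtain ⟨⟨φ, d, hφ⟩, -⟩ := h (Fin k ⊕ Fin (N + 1)) 0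
    (fun i => if hi : i < k then Sum.inl (Sum.inl ⟨i, hi⟩) else
      Sum.inl (Sum.inr (Fin.ofNat (N + 1) (i - k))))
  refine ⟨N + 1, φ, fun i => w i, d, fun v => ?_⟩
  rw [hP]
  refine (hφ _ _ (g v) fun i hi => ?_).symm
  by_cases hik : i < k
  · simp only [hik, dif_pos, Sum.elim_inl]
    exact hg1 v ⟨i, hik⟩
  · simp only [hik, dif_neg, Sum.elim_inl, Sum.elim_inr, not_false_eq_true]
    have := hg2 v (i - k)
    rw [Nat.sub_add_cancel (by omega)] at this
    rw [this]
    congr 1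
    simp only [Fin.ofNat]
    rw [Nat.mod_eq_of_lt (by omega)]

theorem S.def1 {m : ℕ} {R : (ℕ → M) → Prop} (hR : S m R) (w : ℕ → M) :
    SigmaDef1 m M {x | R (cn x w)} := by
  refine hR.sigmaDef 1 _ (fun v => cn (v 0) w) w ?_ ?_ (fun v => Iff.rfl)
  · intro v i; fin_cases i; rfl
  · intro v i; rfl

theorem S.def2 {m : ℕ} {R : (ℕ → M) → Prop} (hR : S m R) (w : ℕ → M) :
    SigmaDef2 m M (fun x y => R (cn x (cn y w))) := by
  refine hR.sigmaDef 2 _ (fun v => cn (v 0) (cn (v 1) w)) w ?_ ?_ (fun v => Iff.rfl)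
  · intro v i; fin_cases i <;> rfl
  · intro v i; rfl

theorem ind_of_ISig {n : ℕ} (h : ISig n M) : Ind M n :=
  fun _ hR e h0 hs => h _ (hR.def1 e) h0 hs

/-! Translation from formulas to semantic relations. -/

theorem term_Tm {α : Type} {n : ℕ} (t : lang.Term (α ⊕ Fin n)) (ι : α → ℕ) (κ : Fin n → ℕ) :
    Tm (M := M) (fun e => t.realize (Sum.elim (fun a => e (ι a)) (fun i => e (κ i)))) := by
  induction t with
  | var a =>
    rcases a with a | i
    · exact Tm.var (ι a)
    · exact Tm.var (κ i)
  | @func l f ts ih =>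
    cases f with
    | zero =>
      have : (fun e : ℕ → M => (Term.func (L := lang) Func.zero ts).realize
        (Sum.elim (fun a => e (ι a)) (fun i => e (κ i)))) = fun _ => 0 := by
        funext e
        show Structure.funMap (L := lang) Func.zero _ = Structure.funMap (L := lang) Func.zero _
        congr 1; funext i; exact i.elim0
      rw [this]; exact Tm.zero
    | one =>
      have : (fun e : ℕ → M => (Term.func (L := lang) Func.one ts).realize
        (Sum.elim (fun a => e (ι a)) (fun i => e (κ i)))) = fun _ => 1 := by
        funext e
        show Structure.funMap (L := lang) Func.one _ = Structure.funMap (L := lang) Func.one _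
        congr 1; funext i; exact i.elim0
      rw [this]; exact Tm.one
    | add =>
      have h := Tm.add (ih 0) (ih 1)
      refine cast (congrArg Tm ?_) h
      funext e
      show Structure.funMap (L := lang) Func.add _ = Structure.funMap (L := lang) Func.add _
      congr 1; funext i; fin_cases i <;> rfl
    | mul =>
      have h := Tm.mul (ih 0) (ih 1)
      refine cast (congrArg Tm ?_) h
      funext e
      show Structure.funMap (L := lang) Func.mul _ = Structure.funMap (L := lang) Func.mul _
      congr 1; funext i; fin_cases i <;> rfl

theorem realize_snoc {α : Type} {n : ℕ} (φ : lang.BoundedFormula α (n + 1)) (ι : α → ℕ)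
    (κ : Fin n → ℕ) (x : M) (e : ℕ → M) :
    φ.Realize (fun a => cn x e (ι a + 1)) (fun i => cn x e
      ((Fin.snoc (fun i => κ i + 1) 0 : Fin (n + 1) → ℕ) i)) ↔
    φ.Realize (fun a => e (ι a)) (Fin.snoc (fun i => e (κ i)) x) := by
  have : (fun i => cn x e ((Fin.snoc (fun i => κ i + 1) 0 : Fin (n + 1) → ℕ) i)) =
      (Fin.snoc (fun i => e (κ i)) x : Fin (n + 1) → M) := by
    funext i
    refine Fin.lastCases ?_ (fun i => ?_) i
    · simp [cn]
    · simp [cn]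
  rw [this]; rfl

theorem delta0_D0 {α : Type} {n : ℕ} {φ : lang.BoundedFormula α n} (h : IsDelta0 n φ) :
    ∀ (ι : α → ℕ) (κ : Fin n → ℕ),
    D0 (M := M) (fun e => φ.Realize (fun a => e (ι a)) (fun i => e (κ i))) := by
  induction h with
  | falsum n => intro ι κ; exact D0.fls
  | equal n t u => intro ι κ; exact D0.eq (term_Tm t ι κ) (term_Tm u ι κ)
  | rel n l R ts =>
    intro ι κ
    cases R with
    | lt =>
      have h := D0.lt (M := M) (term_Tm (ts 0) ι κ) (term_Tm (ts 1) ι κ)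
      refine cast (congrArg D0 ?_) h
      funext e
      show Structure.RelMap (L := lang) Rel.lt _ = Structure.RelMap (L := lang) Rel.lt _
      congr 1; funext i; fin_cases i <;> rfl
  | imp n _ _ h1 h2 => intro ι κ; exact D0.imp (h1 ι κ) (h2 ι κ)
  | @bdAll n t φ _ ih =>
    intro ι κ
    have h := D0.ball (term_Tm t ι κ) (ih (fun a => ι a + 1) (Fin.snoc (fun i => κ i + 1) 0))
    refine cast (congrArg D0 ?_) h
    funext e
    refine propext ?_
    rw [BoundedFormula.realize_all]
    refine forall_congr' fun x => ?_
    rw [BoundedFormula.realize_imp, realize_ltFm, realize_lift, realize_snoc]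
    simp

mutual
theorem sigma_S (hPA : PAm M) {α : Type} : ∀ {m n : ℕ} {φ : lang.BoundedFormula α n},
    SigmaFm m n φ → (∀ i, i < m → Good M i) → ∀ (ι : α → ℕ) (κ : Fin n → ℕ),
    S (M := M) m (fun e => φ.Realize (fun a => e (ι a)) (fun i => e (κ i)))
  | _, _, _, .delta0 _ _ h, _, ι, κ => S.ofD0 (delta0_D0 h ι κ)
  | _, _, _, .ofPi m _ h, hg, ι, κ =>
    (pi_S hPA h (fun i hi => hg i (by omega)) ι κ).compl.congr (fun _ => not_not.symm)
  | _, _, _, .ex m n h, hg, ι, κ => by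
    have h1 := S.ex hPA (hg m (by omega)) (sigma_S hPA h hg (fun a => ι a + 1)
      (Fin.snoc (fun i => κ i + 1) 0))
    refine h1.congr fun e => ?_
    rw [BoundedFormula.realize_ex]
    exact exists_congr fun x => (realize_snoc _ ι κ x e).symm
theorem pi_S (hPA : PAm M) {α : Type} : ∀ {m n : ℕ} {φ : lang.BoundedFormula α n},
    PiFm m n φ → (∀ i, i < m → Good M i) → ∀ (ι : α → ℕ) (κ : Fin n → ℕ),
    S (M := M) m (fun e => ¬ φ.Realize (fun a => e (ι a)) (fun i => e (κ i)))
  | _, _, _, .delta0 _ _ h, _, ι, κ => S.ofD0 (delta0_D0 h ι κ).not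
  | _, _, _, .ofSigma m _ h, hg, ι, κ =>
    (sigma_S hPA h (fun i hi => hg i (by omega)) ι κ).compl
  | _, _, _, .all m n h, hg, ι, κ => by
    have h1 := S.ex hPA (hg m (by omega)) (pi_S hPA h hg (fun a => ι a + 1)
      (Fin.snoc (fun i => κ i + 1) 0))
    refine h1.congr fun e => ?_
    rw [BoundedFormula.realize_all]
    push Not
    exact exists_congr fun x => not_congr (realize_snoc _ ι κ x e).symm
end

theorem def2_S (hPA : PAm M) {m : ℕ} (hg : ∀ i, i < m → Good M i) {F : M → M → Prop}
    (hF : SigmaDef2 m M F) : ∃ (R : (ℕ → M) → Prop) (w : ℕ → M), S m R ∧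
      ∀ x y, F x y ↔ R (cn x (cn y w)) := by
  obtain ⟨p, φ, w, d, h⟩ := hF
  refine ⟨_, fun i => if hi : i < p then w ⟨i, hi⟩ else 0,
    sigma_S hPA d hg (Sum.elim (fun i => i.val) (fun j => j.val + 2)) finZeroElim, fun x y => ?_⟩
  refine (h ![x, y]).trans ?_
  apply iff_of_eq
  congr 1
  · funext a
    rcases a with i | j
    · fin_cases i <;> rfl
    · simp [cn]
  · funext i; exact i.elim0

/-- Least number principle. -/
theorem least (hPA : PAm M) {n : ℕ} (hI : Ind M n) (hg : Good M n) {T : (ℕ → M) → Prop}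
    (hT : S n T) (e : ℕ → M) (x : M) (hx : ¬ T (cn x e)) :
    ∃ z, ¬ T (cn z e) ∧ ∀ z', z' < z → T (cn z' e) := by
  have h1 : S n (fun e => T (cn (e 0) (sh 2 e))) := hT.subst (Ev.cn (Tm.var 0) (Ev.sh 2))
  have h2 := hg.ball (t := fun e => e 0) (Tm.var 0) h1
  by_contra hc
  push Not at hc
  have := hI _ h2 e ?_ ?_ (x + 1) x ?_
  · exact hx this
  · intro z hz; exact absurd hz (not_lt_zero hPA z)
  · intro u hu z hz
    rcases lt_succ hPA hz with h3 | h3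
    · exact hu z h3
    · change z = u at h3
      subst h3
      by_contra hnz
      obtain ⟨z', hz', hh⟩ := hc z hnz
      exact hh (hu z' hz')
  · obtain ⟨w, hw, -⟩ := lt_max hPA x x
    show x < x + 1
    rcases hPA.lt_total x (x + 1) with h | h | h
    · exact h
    · have := add_lt_left hPA x hPA.zero_lt_one
      rwa [hPA.add_zero] at this
    · have := add_lt_left hPA x hPA.zero_lt_one
      rwa [hPA.add_zero] at this

/-- Uniformization of `Σ_{n+1}` relations. -/
theorem uniformize (hPA : PAm M) {n : ℕ} (hI : Ind M n) (hg : Good M n) {R : (ℕ → M) → Prop}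
    (hR : S (n + 1) R) : ∃ R', S (n + 1) R' ∧ ∀ e : ℕ → M,
      (∀ i v, R' (cn i (cn v e)) → R (cn i (cn v e))) ∧
      (∀ i v, R (cn i (cn v e)) → ∃ v', R' (cn i (cn v' e))) ∧
      (∀ i v v', R' (cn i (cn v e)) → R' (cn i (cn v' e)) → v = v') := by
  obtain ⟨Q, hQ, h⟩ := hR
  -- U : environment (z, i, e)
  have u1 : S n (fun e => Q (cn (e 0) (cn (e 3) (cn (e 1) (sh 4 e))))) :=
    hQ.subst (Ev.cn (Tm.var 0) (Ev.cn (Tm.var 3) (Ev.cn (Tm.var 1) (Ev.sh 4))))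
  have u2 := hg.ball (t := fun e => e 1) (Tm.var 1) u1
  have u3 := hg.ball (t := fun e => e 0) (Tm.var 0) u2
  obtain ⟨U, hU, hUd⟩ : ∃ U : (ℕ → M) → Prop, S n U ∧ ∀ z i e, U (cn z (cn i e)) ↔
    ∀ v, v < z → ∀ y, y < z → Q (cn y (cn i (cn v e))) := ⟨_, u3, fun z i e => Iff.rfl⟩
  clear u1 u2 u3
  -- V : environment (v, z, i, e)
  have v1 : S n (fun e => Q (cn (e 0) (cn (e 3) (cn (e 1) (sh 4 e))))) :=
    hQ.subst (Ev.cn (Tm.var 0) (Ev.cn (Tm.var 3) (Ev.cn (Tm.var 1) (Ev.sh 4))))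
  have v2 := hg.ball (t := fun e => e 1) (Tm.var 1) v1
  obtain ⟨V, hV, hVd⟩ : ∃ V : (ℕ → M) → Prop, S n V ∧ ∀ v z i e, V (cn v (cn z (cn i e))) ↔
    ∀ y, y < z → Q (cn y (cn i (cn v e))) := ⟨_, v2, fun v z i e => Iff.rfl⟩
  clear v1 v2
  -- environment (z, i, v, e)
  have a1 : S (n + 1) (fun e => ¬ U (cn (e 0) (cn (e 1) (sh 3 e)))) :=
    (hU.subst (Ev.cn (Tm.var 0) (Ev.cn (Tm.var 1) (Ev.sh 3)))).compl
  have a2 : S (n + 1) (fun e => ∀ z', z' < e 0 → U (cn z' (cn (e 1) (sh 3 e)))) :=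
    (hg.ball (t := fun e => e 0) (Tm.var 0)
      (hU.subst (Ev.cn (Tm.var 0) (Ev.cn (Tm.var 2) (Ev.sh 4))))).succ
  have a3 : S (n + 1) (fun e => ¬ V (cn (e 2) (cn (e 0) (cn (e 1) (sh 3 e))))) :=
    (hV.subst (Ev.cn (Tm.var 2) (Ev.cn (Tm.var 0) (Ev.cn (Tm.var 1) (Ev.sh 3))))).compl
  have a4 : S (n + 1) (fun e => ∀ v', v' < e 2 → V (cn v' (cn (e 0) (cn (e 1) (sh 3 e))))) :=
    (hg.ball (t := fun e => e 2) (Tm.var 2)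
      (hV.subst (Ev.cn (Tm.var 0) (Ev.cn (Tm.var 1) (Ev.cn (Tm.var 2) (Ev.sh 4)))))).succ
  have a5 := S.ex hPA hg (S.and_succ hPA hg (S.and_succ hPA hg a1 a2) (S.and_succ hPA hg a3 a4))
  obtain ⟨R', hR', hd⟩ : ∃ R' : (ℕ → M) → Prop, S (n + 1) R' ∧ ∀ i v e, R' (cn i (cn v e)) ↔
    ∃ z, (¬ U (cn z (cn i e)) ∧ ∀ z', z' < z → U (cn z' (cn i e))) ∧
      (¬ V (cn v (cn z (cn i e))) ∧ ∀ v', v' < v → V (cn v' (cn z (cn i e)))) :=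
    ⟨_, a5, fun i v e => Iff.rfl⟩
  refine ⟨R', hR', fun e => ⟨?_, ?_, ?_⟩⟩
  · intro i v hv
    obtain ⟨z, -, hz, -⟩ := (hd _ _ _).1 hv
    rw [hVd] at hz
    push Not at hz
    obtain ⟨y, -, hy⟩ := hz
    exact (h _).2 ⟨y, hy⟩
  · intro i v hv
    obtain ⟨y, hy⟩ := (h _).1 hv
    obtain ⟨w, hw1, hw2⟩ := lt_max hPA v y
    obtain ⟨z, hz, hzl⟩ := least hPA hI hg hU (cn i e) w
      (fun hh => hy ((hUd _ _ _).1 hh v hw1 y hw2))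
    have hz2 := hz
    rw [hUd] at hz2
    push Not at hz2
    obtain ⟨v1, hv1, y1, hy1, hq⟩ := hz2
    obtain ⟨v2, hv2, hvl⟩ := least hPA hI hg hV (cn z (cn i e)) v1
      (fun hh => hq ((hVd _ _ _ _).1 hh y1 hy1))
    exact ⟨v2, (hd _ _ _).2 ⟨z, ⟨hz, hzl⟩, hv2, hvl⟩⟩
  · intro i v v' hv hv'
    obtain ⟨z, ⟨hz, hzl⟩, hv2, hvl⟩ := (hd _ _ _).1 hv
    obtain ⟨z', ⟨hz', hzl'⟩, hv2', hvl'⟩ := (hd _ _ _).1 hv'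
    have hzz : z = z' := by
      rcases hPA.lt_total z z' with h1 | h1 | h1
      · exact absurd (hzl' _ h1) hz
      · exact h1
      · exact absurd (hzl _ h1) hz'
    subst hzz
    rcases hPA.lt_total v v' with h1 | h1 | h1
    · exact absurd (hvl' _ h1) hv2
    · exact h1
    · exact absurd (hvl _ h1) hv2'

theorem inj_comp (hPA : PAm M) {n : ℕ} (hg : ∀ i, i ≤ n → Good M i) {a b c : M}
    (h1 : ExSigmaInj M (n + 1) c b) (h2 : ExSigmaInj M (n + 1) b a) :
    ExSigmaInj M (n + 1) c a := by
  obtain ⟨F, hF, f1, f2, f3⟩ := h1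
  obtain ⟨G, hG, g1, g2, g3⟩ := h2
  obtain ⟨R, w, hR, hRF⟩ := def2_S hPA (fun i hi => hg i (by omega)) hF
  obtain ⟨R', w', hR', hRG⟩ := def2_S hPA (fun i hi => hg i (by omega)) hG
  -- merge the two parameter environments
  let mix : ℕ → M := fun i => if i % 2 = 0 then w (i / 2) else w' (i / 2)
  have hg' := hg n le_rfl
  have m1 : Ev (M := M) (fun e i => e (2 * i + 3)) := fun i => Tm.var _
  have m2 : Ev (M := M) (fun e i => e (2 * i + 1 + 3)) := fun i => Tm.var _
  have k1 : S (n + 1) (fun e => R (cn (e 1) (cn (e 0) (fun i => e (2 * i + 3))))) :=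
    hR.subst (Ev.cn (Tm.var 1) (Ev.cn (Tm.var 0) m1))
  have k2 : S (n + 1) (fun e => R' (cn (e 0) (cn (e 2) (fun i => e (2 * i + 1 + 3))))) :=
    hR'.subst (Ev.cn (Tm.var 0) (Ev.cn (Tm.var 2) m2))
  have k3 := (S.ex hPA hg' (S.and_succ hPA hg' k1 k2)).def2 mix
  have e1 : (fun i => mix (2 * i)) = w := by
    funext i; simp [mix]
  have e2 : (fun i => mix (2 * i + 1)) = w' := by
    funext i
    have : (2 * i + 1) / 2 = i := by omega
    simp [mix, this]
  have k4 : SigmaDef2 (n + 1) M (fun u v => ∃ x, F u x ∧ G x v) := by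
    have : (fun u v => ∃ x, F u x ∧ G x v) = (fun u v => ∃ x,
        R (cn u (cn x (fun i => mix (2 * i)))) ∧ R' (cn x (cn v (fun i => mix (2 * i + 1))))) := by
      funext u v
      rw [e1, e2]
      simp only [hRF, hRG]
    rw [this]; exact k3
  have hlt : ∀ u x, u < c → F u x → x < b := by
    intro u x hu hx
    obtain ⟨x', hx', hF'⟩ := f1 u hu
    rw [f2 u x x' hu hx hF']; exact hx'
  refine ⟨_, k4, ?_, ?_, ?_⟩
  · intro u hu
    obtain ⟨x, hx, hF'⟩ := f1 u hu
    obtain ⟨v, hv, hG'⟩ := g1 x hx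
    exact ⟨v, hv, x, hF', hG'⟩
  · rintro u v v' hu ⟨x, hx, hv⟩ ⟨x', hx', hv'⟩
    obtain rfl := f2 u x x' hu hx hx'
    exact g2 x v v' (hlt _ _ hu hx) hv hv'
  · rintro u u' v hu hu' ⟨x, hx, hv⟩ ⟨x', hx', hv'⟩
    obtain rfl := g3 x x' v (hlt _ _ hu hx) (hlt _ _ hu' hx') hv hv'
    exact f3 u u' x hu hu' hx hx'

theorem add_closed (hPA : PAm M) {n : ℕ} (hI : Ind M n) (hg : ∀ i, i ≤ n → Good M i)
    {a a' c c' : M} (h1 : ¬ ExSigmaInj M (n + 1) c a) (h2 : ¬ ExSigmaInj M (n + 1) c' a') :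
    ¬ ExSigmaInj M (n + 1) (c * c') (a + a') := by
  rintro ⟨F, hF, f1, f2, f3⟩
  obtain ⟨R, w, hR, hRF⟩ := def2_S hPA (fun i hi => hg i (by omega)) hF
  have hg' := hg n le_rfl
  have hb : ∀ i j, i < c' → j < c → c * i + j < c * c' := fun i j hi hj => block_lt hPA hi hj
  -- every block contains a point mapped to a value at least `a`
  have hex : ∀ i, i < c' → ∃ v j, j < c ∧ F (c * i + j) (a + v) := by
    intro i hi
    by_contra hc
    apply h1
    have k1 : S (n + 1) (fun e => R (cn (e 2 + e 0) (cn (e 1) (sh 3 e)))) :=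
      hR.subst (Ev.cn (Tm.add (Tm.var 2) (Tm.var 0)) (Ev.cn (Tm.var 1) (Ev.sh 3)))
    have k2 := k1.def2 (cn (c * i) w)
    refine ⟨_, k2, ?_, ?_, ?_⟩
    · intro j hj
      obtain ⟨v, _, hv⟩ := f1 _ (hb i j hi hj)
      refine ⟨v, ?_, (hRF _ _).1 hv⟩
      rcases hPA.lt_total v a with h | h | h
      · exact h
      · exact absurd ⟨0, j, hj, by rw [hPA.add_zero, ← h]; exact hv⟩ hc
      · obtain ⟨z, hz⟩ := hPA.sub_exists _ _ h
        exact absurd ⟨z, j, hj, by rw [hz]; exact hv⟩ hc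
    · intro j v v' hj hv hv'
      exact f2 _ v v' (hb i j hi hj) ((hRF _ _).2 hv) ((hRF _ _).2 hv')
    · intro j j' v hj hj' hv hv'
      exact add_cancel hPA (f3 _ _ v (hb i j hi hj) (hb i j' hi hj') ((hRF _ _).2 hv)
        ((hRF _ _).2 hv'))
  have g1 : S (n + 1) (fun e => R (cn (e 3 * e 1 + e 0) (cn (e 4 + e 2) (sh 5 e)))) :=
    hR.subst (Ev.cn (Tm.add (Tm.mul (Tm.var 3) (Tm.var 1)) (Tm.var 0))
      (Ev.cn (Tm.add (Tm.var 4) (Tm.var 2)) (Ev.sh 5)))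
  have g2 := S.ex hPA hg' (S.and_succ hPA hg'
    (S.ofD0 (m := n + 1) (D0.lt (Tm.var 0) (Tm.var 3))) g1)
  obtain ⟨T, hT, hTd⟩ := uniformize hPA hI hg' g2
  obtain ⟨t1, t2, t3⟩ := hTd (cn c (cn a w))
  have t1' : ∀ i v, T (cn i (cn v (cn c (cn a w)))) → ∃ j, j < c ∧ F (c * i + j) (a + v) := by
    intro i v hv
    obtain ⟨j, hj, hh⟩ := t1 i v hv
    exact ⟨j, hj, (hRF _ _).2 hh⟩
  apply h2
  refine ⟨_, hT.def2 (cn c (cn a w)), ?_, ?_, ?_⟩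
  · intro i hi
    obtain ⟨v, j, hj, hv⟩ := hex i hi
    obtain ⟨v', hv'⟩ := t2 i v ⟨j, hj, (hRF _ _).1 hv⟩
    refine ⟨v', ?_, hv'⟩
    obtain ⟨j', hj', hF'⟩ := t1' i v' hv'
    obtain ⟨x, hx, hFx⟩ := f1 _ (hb i j' hi hj')
    rw [← f2 _ _ _ (hb i j' hi hj') hF' hFx] at hx
    exact lt_of_add_lt hPA hx
  · intro i v v' _ hv hv'
    exact t3 i v v' hv hv'
  · intro i i' v hi hi' hv hv'
    obtain ⟨j, hj, hF1⟩ := t1' i v hv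
    obtain ⟨j', hj', hF2⟩ := t1' i' v hv'
    exact block_inj hPA hj hj' (f3 _ _ _ (hb i j hi hj) (hb i' j' hi' hj') hF1 hF2)

end Semantic

end ArithFC

namespace ArithFC

/-- In a model of PA⁻ + IΣn (`n ≥ 1`) where GPHP(Σ_{n+1}) fails, the
set `I = {a : ∃ b, no Σ_{n+1}-definable injection of [0,b) into [0,a)}` is a proper
cut closed under addition, and if `a ∈ I < b` then there is no Σ_{n+1}-definable
injection from `[0,b)` into `[0,a)`. -/
theorem statement_10 (n : ℕ) (hn : 1 ≤ n) (M : Type) [lang.Structure M]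
    (hPA : PAm M) (hI : ISig n M) (hG : ¬GPHP M (n + 1)) :
    let I : Set M := {a | ∃ b : M, ¬ExSigmaInj M (n + 1) b a}
    (∃ a, a ∈ I) ∧
      (∀ a a' : M, a ∈ I → a' < a → a' ∈ I) ∧
      (∀ a ∈ I, a + 1 ∈ I) ∧
      (∃ a : M, a ∉ I) ∧
      (∀ a a' : M, a ∈ I → a' ∈ I → a + a' ∈ I) ∧
      (∀ a ∈ I, ∀ b : M, (∀ i ∈ I, i < b) → ¬ExSigmaInj M (n + 1) b a) := by
  intro I
  have hInd := ind_of_ISig hI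
  have hg := good_of_ind hPA hInd
  have hadd : ∀ a a' : M, a ∈ I → a' ∈ I → a + a' ∈ I := by
    rintro a a' ⟨c, hc⟩ ⟨c', hc'⟩
    exact ⟨c * c', add_closed hPA hInd hg hc hc'⟩
  have h01 : (0 : M) < 1 + 1 := lt_add_of_lt hPA 1 hPA.zero_lt_one
  have h11 : (1 : M) < 1 + 1 := by
    have := add_lt_left hPA 1 hPA.zero_lt_one
    rwa [hPA.add_zero] at this
  have hone : (1 : M) ∈ I := by
    refine ⟨1 + 1, ?_⟩
    rintro ⟨F, -, f1, f2, f3⟩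
    have hz : ∀ v : M, v < 1 → v = 0 := by
      intro v hv
      rcases hPA.zero_le v with h | h
      · rcases hPA.discrete v h with h' | h'
        · exact absurd (hPA.lt_trans _ _ _ hv h') (hPA.lt_irrefl _)
        · rw [← h'] at hv; exact absurd hv (hPA.lt_irrefl _)
      · exact h.symm
    obtain ⟨v, hv, hF⟩ := f1 0 h01
    obtain ⟨v', hv', hF'⟩ := f1 1 h11
    rw [hz v hv] at hF
    rw [hz v' hv'] at hF'
    have := f3 0 1 0 h01 h11 hF hF'
    have h := hPA.zero_lt_one
    rw [← this] at h
    exact hPA.lt_irrefl _ h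
  refine ⟨⟨1, hone⟩, ?_, fun a ha => hadd a 1 ha hone, ?_, hadd, ?_⟩
  · rintro a a' ⟨b, hb⟩ haa
    refine ⟨b, ?_⟩
    rintro ⟨F, hF, f1, f2, f3⟩
    refine hb ⟨F, hF, fun u hu => ?_, f2, f3⟩
    obtain ⟨v, hv, h⟩ := f1 u hu
    exact ⟨v, hPA.lt_trans _ _ _ hv haa, h⟩
  · unfold GPHP at hG
    push Not at hG
    obtain ⟨x, hx⟩ := hG
    exact ⟨x, fun ⟨y, hy⟩ => hy (hx y)⟩
  · rintro a ⟨c, hc⟩ b hb hba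
    have hbI : b ∉ I := fun h => hPA.lt_irrefl b (hb b h)
    have hcb : ExSigmaInj M (n + 1) c b := by
      by_contra h
      exact hbI ⟨c, h⟩
    exact hc (inj_comp hPA hg hcb hba)

end ArithFC
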